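/- There exists a constant C > 0 such that for every x = (x₁,x₂,a) ∈ G with r(x) ≥ 1, one has sup_{t>0} |X₀ p_t(x)| ≤ C ( 1/(a · r(x)³ · cosh r(x)) + 1/(r(x)² · cosh² r(x)) ). -/

import Mathlib

open MeasureTheory Real Filter Set
open scoped ENNReal

noncomputable section

/-- The group `G = ℝ² ⋊ ℝ⁺`, realized as triples `(x₁, x₂, a)` (only `a > 0` is relevant). -/
abbrev G : Type := ℝ × ℝ × ℝ

/-- Group product `(x₁,x₂,a)·(x₁',x₂',a') = (x₁+a x₁', x₂+a x₂', a a')`. -/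
def gMul (x y : G) : G := (x.1 + x.2.2 * y.1, x.2.1 + x.2.2 * y.2.1, x.2.2 * y.2.2)

/-- Group inverse `(x₁,x₂,a)⁻¹ = (−x₁/a, −x₂/a, 1/a)`. -/
def gInv (x : G) : G := (-x.1 / x.2.2, -x.2.1 / x.2.2, 1 / x.2.2)

/-- The identity `e = (0,0,1)`. -/
def gE : G := (0, 0, 1)

/-- The right Haar measure `dρ = a⁻¹ dx₁ dx₂ da` (supported where `a > 0`). -/
def ρG : Measure G :=
  (volume : Measure G).withDensity fun x => ENNReal.ofReal (if 0 < x.2.2 then x.2.2⁻¹ else 0)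

/-- The modular function `δ(x₁,x₂,a) = a⁻²`. -/
def deltaG (x : G) : ℝ := (x.2.2 ^ 2)⁻¹

/-- `|x| = √(x₁² + x₂²)`. -/
def normG (x : G) : ℝ := Real.sqrt (x.1 ^ 2 + x.2.1 ^ 2)

/-- `cosh r(x) = (a + a⁻¹ + a⁻¹|x|²)/2`. -/
def coshArg (x : G) : ℝ := (x.2.2 + x.2.2⁻¹ + x.2.2⁻¹ * (x.1 ^ 2 + x.2.1 ^ 2)) / 2

/-- `r(x) ≥ 0` is determined by `cosh r(x) = coshArg x`; explicitly `r = arcosh (coshArg x)`. -/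
def rG (x : G) : ℝ := Real.log (coshArg x + Real.sqrt (coshArg x ^ 2 - 1))

/-- The left-invariant distance `d(x,y) = r(x⁻¹y)`. -/
def dG (x y : G) : ℝ := rG (gMul (gInv x) y)

/-- The heat kernel
`p_t(x) = (8π^{3/2})⁻¹ δ(x)^{1/2} (r(x)/sinh r(x)) t^{−3/2} exp(−r(x)²/(4t))`,
with `r/sinh r := 1` at `x = e`. -/
def heatK (t : ℝ) (x : G) : ℝ :=
  (8 * Real.pi ^ ((3 : ℝ)/2))⁻¹ * Real.sqrt (deltaG x) *
    (if rG x = 0 then 1 else rG x / Real.sinh (rG x)) *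
    t ^ (-(3 : ℝ)/2) * Real.exp (-(rG x ^ 2) / (4 * t))

/-- Convolution `f ∗ p_t(x) = ∫ f(xy⁻¹) p_t(y) dρ(y)`. -/
def convHeat (f : G → ℝ) (t : ℝ) (x : G) : ℝ := ∫ y, f (gMul x (gInv y)) * heatK t y ∂ρG

/-- The heat maximal operator `Mf(x) = sup_{t>0} |f ∗ p_t(x)|` (valued in `ℝ≥0∞`). -/
def maxHeat (f : G → ℝ) (x : G) : ℝ≥0∞ :=
  ⨆ (t : ℝ) (_ : 0 < t), ENNReal.ofReal |convHeat f t x|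

/-- Calderón–Zygmund sets. -/
def IsCZ (R : Set G) : Prop :=
  ∃ c : G, ∃ L r : ℝ, 0 < c.2.2 ∧ 0 < L ∧ 0 < r ∧
    R = Set.Icc (c.1 - L/2) (c.1 + L/2) ×ˢ
        (Set.Icc (c.2.1 - L/2) (c.2.1 + L/2) ×ˢ
         Set.Icc (c.2.2 * Real.exp (-r)) (c.2.2 * Real.exp r)) ∧
    (r < 1 → Real.exp 2 * c.2.2 * r ≤ L ∧ L < Real.exp 8 * c.2.2 * r) ∧
    (1 ≤ r → c.2.2 * Real.exp (2*r) ≤ L ∧ L < c.2.2 * Real.exp (8*r))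

/-- Atoms: `A ∈ L¹(ρ)` supported in a Calderón–Zygmund set `R`, with
`‖A‖_∞ ≤ ρ(R)⁻¹` and `∫ A dρ = 0`. -/
def IsAtomG (A : G → ℝ) : Prop :=
  Integrable A ρG ∧
  ∃ R : Set G, IsCZ R ∧ (∀ x ∉ R, A x = 0) ∧
    eLpNorm A ⊤ ρG ≤ (ρG R)⁻¹ ∧
    ∫ x, A x ∂ρG = 0

/-- `f = Σ_j lam_j A_j` with atoms `A_j`, `Σ_j |lam_j| < ∞`, converging in `L¹(ρ)`. -/
def IsH1Decomp (f : G → ℝ) (lam : ℕ → ℝ) (A : ℕ → G → ℝ) : Prop :=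
  (∀ j, IsAtomG (A j)) ∧ Summable (fun j => |lam j|) ∧
  Tendsto (fun N => eLpNorm (fun x => f x - ∑ j ∈ Finset.range N, lam j * A j x) 1 ρG)
    atTop (nhds 0)

/-- The Hardy space `H¹`. -/
def MemH1 (f : G → ℝ) : Prop :=
  Integrable f ρG ∧ ∃ lam A, IsH1Decomp f lam A

/-- `‖f‖_{H¹} = inf Σ_j |lam_j|` over all atomic decompositions. -/
def H1norm (f : G → ℝ) : ℝ :=
  sInf {s | ∃ lam A, IsH1Decomp f lam A ∧ s = ∑' j, |lam j|}

/-- The left-invariant vector field `X₀ = a ∂_a`. -/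
def X0 (f : G → ℝ) (x : G) : ℝ := x.2.2 * deriv (fun s => f (x.1, x.2.1, s)) x.2.2

/-- The left-invariant vector field `X₁ = a ∂_{x₁}`. -/
def X1 (f : G → ℝ) (x : G) : ℝ := x.2.2 * deriv (fun s => f (s, x.2.1, x.2.2)) x.1

/-- The left-invariant vector field `X₂ = a ∂_{x₂}`. -/
def X2 (f : G → ℝ) (x : G) : ℝ := x.2.2 * deriv (fun s => f (x.1, s, x.2.2)) x.2.1

/-- `‖∇p_t(x)‖`, the Euclidean norm of `(X₀p_t, X₁p_t, X₂p_t)` at `x`. -/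
def gradHeatNorm (t : ℝ) (x : G) : ℝ :=
  Real.sqrt (X0 (heatK t) x ^ 2 + X1 (heatK t) x ^ 2 + X2 (heatK t) x ^ 2)

/-- The Poisson kernel `q_t(x) = π⁻² δ(x)^{1/2} (r(x)/sinh r(x)) · t/(t²+r(x)²)²`. -/
def poissonK (t : ℝ) (x : G) : ℝ :=
  (Real.pi ^ 2)⁻¹ * Real.sqrt (deltaG x) *
    (if rG x = 0 then 1 else rG x / Real.sinh (rG x)) *
    (t / (t ^ 2 + rG x ^ 2) ^ 2)

/-- Convolution `f ∗ q_t(x) = ∫ f(xy⁻¹) q_t(y) dρ(y)`. -/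
def convPoisson (f : G → ℝ) (t : ℝ) (x : G) : ℝ := ∫ y, f (gMul x (gInv y)) * poissonK t y ∂ρG

/-- The Poisson maximal operator `M̃f(x) = sup_{t>0} |f ∗ q_t(x)|`. -/
def maxPoisson (f : G → ℝ) (x : G) : ℝ≥0∞ :=
  ⨆ (t : ℝ) (_ : 0 < t), ENNReal.ofReal |convPoisson f t x|

/-- `G_{r₁}(x) = sup_{z ∈ B(x,r₁/2)} sup_{t>0} ‖∇p_t(z)‖`. -/
def Gsup (r1 : ℝ) (x : G) : ℝ≥0∞ :=
  ⨆ (z : G) (_ : 0 < z.2.2 ∧ dG x z < r1 / 2) (t : ℝ) (_ : 0 < t),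
    ENNReal.ofReal (gradHeatNorm t z)

/-- `R₀ = [−1,1]×[−1,1]×[e⁻¹,e]`. -/
def R0set : Set G :=
  Set.Icc (-1 : ℝ) 1 ×ˢ (Set.Icc (-1 : ℝ) 1 ×ˢ Set.Icc (Real.exp (-1)) (Real.exp 1))

/-- `R_L = [L−1,L+1]×[−1,1]×[e⁻¹,e]`. -/
def RLset (L : ℝ) : Set G :=
  Set.Icc (L - 1) (L + 1) ×ˢ (Set.Icc (-1 : ℝ) 1 ×ˢ Set.Icc (Real.exp (-1)) (Real.exp 1))

/-- `f_L = χ_{R_L} − χ_{R₀}`. -/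
def fL (L : ℝ) : G → ℝ := fun x =>
  (RLset L).indicator (fun _ => (1 : ℝ)) x - R0set.indicator (fun _ => (1 : ℝ)) x

/-- The mean of `g` over `R` with respect to `ρ`. -/
def czMean (g : G → ℝ) (R : Set G) : ℝ := (∫ x in R, g x ∂ρG) / (ρG R).toReal

/-- `‖g‖_{BMO} = sup_R ρ(R)⁻¹ ∫_R |g − g_R| dρ` over Calderón–Zygmund sets `R`. -/
def czBMO (g : G → ℝ) : ℝ≥0∞ :=
  ⨆ (R : Set G) (_ : IsCZ R),
    (ρG R)⁻¹ * ∫⁻ x in R, ENNReal.ofReal |g x - czMean g R| ∂ρG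

/-- `‖h‖_{BMO(ℝ)} = sup_Q |Q|⁻¹ ∫_Q |h − h_Q|` over bounded intervals `Q ⊂ ℝ`. -/
def lineBMO (h : ℝ → ℝ) : ℝ≥0∞ :=
  ⨆ (a : ℝ) (b : ℝ) (_ : a < b),
    (ENNReal.ofReal (b - a))⁻¹ *
      ∫⁻ s in Set.Icc a b, ENNReal.ofReal |h s - (∫ u in Set.Icc a b, h u) / (b - a)|

/-- `2R₀ = [−2,2]×[−2,2]×[e⁻²,e²]`. -/
def twoR0set : Set G :=
  Set.Icc (-2 : ℝ) 2 ×ˢ (Set.Icc (-2 : ℝ) 2 ×ˢ Set.Icc (Real.exp (-2)) (Real.exp 2))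

/-- The set `{x₁ > 3, |x₂| < 1, e⁻¹ < a < e}`. -/
def domSpecial : Set G :=
  {x : G | 3 < x.1 ∧ |x.2.1| < 1 ∧ Real.exp (-1) < x.2.2 ∧ x.2.2 < Real.exp 1}

/-- The function equal to `1/(x₁ (log x₁)^{3/2})` on `{x₁ > 3, |x₂| < 1, e⁻¹ < a < e}`,
to `c₀` on `R₀`, and `0` elsewhere. -/
def fSpecial (c0 : ℝ) : G → ℝ := fun x =>
  domSpecial.indicator (fun y => (y.1 * Real.log y.1 ^ ((3 : ℝ)/2))⁻¹) x
    + R0set.indicator (fun _ => c0) x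

lemma aux_time (r t : ℝ) (hr : 0 < r) (ht : 0 < t) :
    t ^ (-(3 : ℝ)/2) * Real.exp (-(r ^ 2) / (4 * t)) * (1 + r ^ 2 / (2 * t)) ≤ 227 / r ^ 3 := by
  obtain ⟨s, hs, rfl⟩ : ∃ s : ℝ, 0 < s ∧ t = s ^ 2 :=
    ⟨√t, Real.sqrt_pos.mpr ht, (Real.sq_sqrt ht.le).symm⟩
  have h1 : (s ^ 2) ^ (-(3 : ℝ)/2) = (s ^ 3)⁻¹ := by
    rw [← Real.rpow_natCast s 2, ← Real.rpow_mul hs.le, ← Real.rpow_natCast s 3,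
      ← Real.rpow_neg hs.le]
    norm_num
  obtain ⟨w, hw, rfl⟩ : ∃ w : ℝ, 0 < w ∧ r = w * s := ⟨r / s, by positivity, by field_simp⟩
  rw [h1]
  have h2 : -((w * s) ^ 2) / (4 * s ^ 2) = -(w ^ 2 / 4) := by field_simp
  have h3 : (w * s) ^ 2 / (2 * s ^ 2) = w ^ 2 / 2 := by field_simp
  rw [h2, h3, Real.exp_neg]
  set z := w ^ 2 / 4 with hz
  have hz0 : 0 ≤ z := by positivity
  have e1 := Real.pow_div_factorial_le_exp z hz0 1
  have e2 := Real.pow_div_factorial_le_exp z hz0 2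
  have e3 := Real.pow_div_factorial_le_exp z hz0 3
  norm_num [Nat.factorial] at e1 e2 e3
  have e0 : 1 ≤ Real.exp z := Real.one_le_exp hz0
  have hE := Real.exp_pos z
  have key : w ^ 3 * (1 + w ^ 2 / 2) ≤ 227 * Real.exp z := by
    have hw3 : w ^ 3 ≤ 1 + 16 * z ^ 2 := by
      rw [hz]; nlinarith [sq_nonneg (w ^ 2 - w / 2), sq_nonneg (w - 1), sq_nonneg (w^2 - 1)]
    have hw2 : w ^ 2 / 2 = 2 * z := by rw [hz]; ring
    rw [hw2]
    have : w ^ 3 * (1 + 2 * z) ≤ (1 + 16 * z ^ 2) * (1 + 2 * z) := by gcongr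
    nlinarith
  have hgoal : (s ^ 3)⁻¹ * (Real.exp z)⁻¹ * (1 + w ^ 2 / 2)
      = (w ^ 3 * (1 + w ^ 2 / 2)) / (Real.exp z) / (w * s) ^ 3 := by
    field_simp
  rw [hgoal]
  gcongr
  rwa [div_le_iff₀ hE]

lemma coshArg_ge_one (x : G) (ha : 0 < x.2.2) : 1 ≤ coshArg x := by
  unfold coshArg
  have h : x.2.2 + x.2.2⁻¹ ≥ 2 := by
    have : x.2.2 + x.2.2⁻¹ - 2 = (x.2.2 - 1) ^ 2 / x.2.2 := by field_simp; ring
    have : 0 ≤ (x.2.2 - 1) ^ 2 / x.2.2 := by positivity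
    linarith
  have : 0 ≤ x.2.2⁻¹ * (x.1 ^ 2 + x.2.1 ^ 2) := by positivity
  linarith

lemma rG_eq (x : G) : rG x = Real.arcosh (coshArg x) := rfl

lemma X0_heatK_eq (x : G) (ha : 0 < x.2.2) (hr : 1 ≤ rG x) (t : ℝ) (ht : 0 < t) :
    X0 (heatK t) x = (8 * Real.pi ^ ((3 : ℝ)/2))⁻¹ *
      (t ^ (-(3 : ℝ)/2) * Real.exp (-(rG x ^ 2) / (4 * t))) *
      ((x.2.2 * Real.sinh (rG x))⁻¹ * (rG x / Real.sinh (rG x) ^ 2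
          - Real.cosh (rG x) / Real.sinh (rG x)
          + Real.cosh (rG x) / Real.sinh (rG x) * (rG x ^ 2 / (2 * t)))
        + (Real.sinh (rG x) ^ 2)⁻¹ * (1 - rG x * (Real.cosh (rG x) / Real.sinh (rG x))
          - rG x ^ 2 / (2 * t))) := by
  obtain ⟨x1, x2, a⟩ := x
  simp only at ha
  have hc1 := coshArg_ge_one (x1, x2, a) ha
  have hcosh : Real.cosh (rG (x1, x2, a)) = coshArg (x1, x2, a) := Real.cosh_arcosh hc1
  have hsinh : Real.sinh (rG (x1, x2, a)) = √(coshArg (x1, x2, a) ^ 2 - 1) :=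
    Real.sinh_arcosh hc1
  have hcgt : 1 < coshArg (x1, x2, a) := by
    rcases hc1.lt_or_eq with h | h
    · exact h
    · exfalso
      rw [rG_eq, ← h, Real.arcosh_zero] at hr
      linarith
  have hc : HasDerivAt (fun s => coshArg (x1, x2, s))
      ((1 + -(a ^ 2)⁻¹ + -(a ^ 2)⁻¹ * (x1 ^ 2 + x2 ^ 2)) / 2) a := by
    unfold coshArg
    have hi := hasDerivAt_inv ha.ne'
    exact (((hasDerivAt_id a).add hi).add (hi.mul_const (x1 ^ 2 + x2 ^ 2))).div_const 2
  have hR : HasDerivAt (fun s => rG (x1, x2, s))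
      ((Real.sinh (rG (x1, x2, a)))⁻¹ *
        ((1 + -(a ^ 2)⁻¹ + -(a ^ 2)⁻¹ * (x1 ^ 2 + x2 ^ 2)) / 2)) a := by
    rw [hsinh]
    exact HasDerivAt.comp (h₂ := Real.arcosh) a (Real.hasDerivAt_arcosh hcgt) hc
  have hd : (1 + -(a ^ 2)⁻¹ + -(a ^ 2)⁻¹ * (x1 ^ 2 + x2 ^ 2)) / 2
      = (a - Real.cosh (rG (x1, x2, a))) / a := by
    rw [hcosh]; unfold coshArg; simp only; field_simp; ring
  rw [hd] at hR
  have hSpos : 0 < Real.sinh (rG (x1, x2, a)) := Real.sinh_pos_iff.mpr (by linarith)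
  have hev : (fun s => heatK t (x1, x2, s)) =ᶠ[nhds a] fun s =>
      (8 * Real.pi ^ ((3 : ℝ)/2))⁻¹ * s⁻¹ *
        (rG (x1, x2, s) / Real.sinh (rG (x1, x2, s))) *
        t ^ (-(3 : ℝ)/2) * Real.exp (-(rG (x1, x2, s) ^ 2) / (4 * t)) := by
    have hn : ∀ᶠ s in nhds a, rG (x1, x2, s) ≠ 0 :=
      hR.continuousAt.eventually_ne (by linarith)
    filter_upwards [hn, lt_mem_nhds ha] with s h1 h2
    unfold heatK deltaG
    rw [if_neg h1, Real.sqrt_inv, Real.sqrt_sq h2.le]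
  unfold X0
  simp only
  rw [hev.deriv_eq]
  have hfin := ((((hasDerivAt_inv ha.ne').const_mul (8 * Real.pi ^ ((3 : ℝ)/2))⁻¹).mul
    (hR.div hR.sinh hSpos.ne')).mul_const (t ^ (-(3 : ℝ)/2))).mul
    (((hR.pow 2).neg.div_const (4 * t)).exp)
  have hfin' := hfin.deriv
  refine (congrArg (a * ·) hfin').trans ?_
  simp only [Pi.mul_apply, Pi.div_apply, Pi.pow_apply, Pi.neg_apply]
  have hcs := Real.cosh_sq (rG (x1, x2, a))
  set r := rG (x1, x2, a)
  set S := Real.sinh r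
  set c := Real.cosh r
  set K := (8 * Real.pi ^ ((3 : ℝ)/2))⁻¹
  set T := t ^ (-(3 : ℝ)/2)
  set E := Real.exp (-(r ^ 2) / (4 * t))
  field_simp
  norm_num
  linear_combination (8 * K * T * E * r * t) * hcs

lemma final_bound (K N y a r S c : ℝ) (hK : 0 < K) (hN : 0 ≤ N) (hy : 0 ≤ y) (ha : 0 < a)
    (hr : 1 ≤ r) (hS : r ≤ S) (hc : 0 < c) (hcs : c ^ 2 = S ^ 2 + 1)
    (hNy : N * (1 + y) ≤ 227 / r ^ 3) :
    |K * N * ((a * S)⁻¹ * (r / S ^ 2 - c / S + c / S * y)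
        + (S ^ 2)⁻¹ * (1 - r * (c / S) - y))|
      ≤ (2724 * K) * (1 / (a * r ^ 3 * c) + 1 / (r ^ 2 * c ^ 2)) := by
  have hS0 : 0 < S := by linarith
  have hr0 : 0 < r := by linarith
  have hc2 : c ≤ 2 * S := by nlinarith
  have hq : c / S ≤ 2 := by rw [div_le_iff₀ hS0]; exact hc2
  have hq0 : 0 ≤ c / S := by positivity
  have hp : r / S ^ 2 ≤ 1 := by rw [div_le_one (by positivity)]; nlinarith
  have hp0 : 0 ≤ r / S ^ 2 := by positivity
  set q := c / S
  set p := r / S ^ 2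
  have b1 : |p - q + q * y| ≤ 3 * (1 + y) := by
    rw [abs_le]; constructor <;> nlinarith [mul_nonneg hq0 hy]
  have b2 : |1 - r * q - y| ≤ 3 * r * (1 + y) := by
    rw [abs_le]; constructor <;> nlinarith [mul_nonneg hr0.le hq0, mul_nonneg hr0.le hy]
  have i1 : (a * S)⁻¹ ≤ 2 / (a * c) := by
    rw [inv_eq_one_div, div_le_div_iff₀ (by positivity) (by positivity)]; nlinarith
  have i2 : (S ^ 2)⁻¹ ≤ 4 / c ^ 2 := by
    rw [inv_eq_one_div, div_le_div_iff₀ (by positivity) (by positivity)]; nlinarith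
  have b3 : |(a * S)⁻¹ * (p - q + q * y) + (S ^ 2)⁻¹ * (1 - r * q - y)|
      ≤ 2 / (a * c) * (3 * (1 + y)) + 4 / c ^ 2 * (3 * r * (1 + y)) := by
    refine (abs_add_le _ _).trans ?_
    rw [abs_mul, abs_mul, abs_of_pos (by positivity : 0 < (a * S)⁻¹),
      abs_of_pos (by positivity : 0 < (S ^ 2)⁻¹)]
    gcongr
  rw [abs_mul, abs_of_nonneg (by positivity : 0 ≤ K * N)]
  calc _ ≤ K * N * (2 / (a * c) * (3 * (1 + y)) + 4 / c ^ 2 * (3 * r * (1 + y))) := by gcongr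
    _ = K * (N * (1 + y)) * (6 / (a * c) + 12 * r / c ^ 2) := by ring
    _ ≤ K * (227 / r ^ 3) * (6 / (a * c) + 12 * r / c ^ 2) := by gcongr
    _ ≤ K * (227 / r ^ 3) * (12 / (a * c) + 12 * r / c ^ 2) := by gcongr; norm_num
    _ = _ := by field_simp; ring

theorem sup_X0_heatK_large :
    ∃ C > (0 : ℝ), ∀ x : G, 0 < x.2.2 → 1 ≤ rG x → ∀ t > (0 : ℝ),
      |X0 (heatK t) x| ≤ C * (1 / (x.2.2 * rG x ^ 3 * Real.cosh (rG x))
        + 1 / (rG x ^ 2 * Real.cosh (rG x) ^ 2)) := by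
  refine ⟨2724 * (8 * Real.pi ^ ((3 : ℝ)/2))⁻¹, by positivity, ?_⟩
  intro x ha hr t ht
  rw [X0_heatK_eq x ha hr t ht]
  have hr0 : 0 < rG x := by linarith
  exact final_bound _ _ (rG x ^ 2 / (2 * t)) _ _ _ _ (by positivity) (by positivity)
    (by positivity) ha hr (Real.self_le_sinh_iff.mpr hr0.le) (Real.cosh_pos _)
    (Real.cosh_sq _) (aux_time _ _ hr0 ht)
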